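/- Let d ≥ 1, let A ≥ 0, and let (α_{k,b})_{(k,b) ∈ Λ} be real coefficients with |α_{k,b}| ≤ A · 2^{−(2k/d + k/2)} for all (k,b) ∈ Λ. Then for every x ∈ ℝ^d and every integer K, Σ_{(k,b) ∈ Λ, k > K} |α_{k,b}| |ψ_{k,b}(x)| ≤ (12^d A / 4) · 2^{−2(K+1)/d} / (1 − 2^{−2/d}). In particular, if f(x) = Σ_{(k,b) ∈ Λ} α_{k,b} ψ_{k,b}(x) with the series converging absolutely at every x, and f_K(x) = Σ_{(k,b) ∈ Λ, k ≤ K} α_{k,b} ψ_{k,b}(x), then |f(x) − f_K(x)| ≤ (12^d A / 4) · 2^{−2(K+1)/d} / (1 − 2^{−2/d}) for every x ∈ ℝ^d. -/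

import Mathlib

open MeasureTheory

/-- The rectifier (ReLU) function. -/
noncomputable def rect (x : ℝ) : ℝ := max 0 x

/-- The trapezoid function `t`: equal to 2 on [-1,1], vanishing outside (-3,3), linear between. -/
noncomputable def trap (x : ℝ) : ℝ := rect (x + 3) - rect (x + 1) - rect (x - 1) + rect (x - 3)

/-- The scaling ("father") function `φ(x) = C_d · rect(Σ_j t(x_j) − 2(d−1))` on `ℝ^d`. -/
noncomputable def scalingFn (d : ℕ) (Cd : ℝ) (x : EuclideanSpace ℝ (Fin d)) : ℝ :=
  Cd * rect ((∑ j, trap (x j)) - 2 * ((d : ℝ) - 1))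

/-- The ("mother") wavelet `ψ(x) = φ(x) − 2⁻¹ φ(2^{−1/d} x)`. -/
noncomputable def psiFn (d : ℕ) (Cd : ℝ) (x : EuclideanSpace ℝ (Fin d)) : ℝ :=
  scalingFn d Cd x - 2⁻¹ * scalingFn d Cd (((2 : ℝ) ^ (-(1 : ℝ) / d)) • x)

/-- The wavelet term `ψ_{k,b}(x) = 2^{k/2} ψ(2^{k/d}(x − b))`. -/
noncomputable def psikb (d : ℕ) (Cd : ℝ) (k : ℤ) (b x : EuclideanSpace ℝ (Fin d)) : ℝ :=
  (2 : ℝ) ^ ((k : ℝ) / 2) * psiFn d Cd (((2 : ℝ) ^ ((k : ℝ) / d)) • (x - b))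

/-- The index set `Λ = {(k,b) : k ∈ ℤ, b ∈ 2^{−k/d} ℤ^d}`. -/
def latticeSet (d : ℕ) : Set (ℤ × EuclideanSpace ℝ (Fin d)) :=
  {p | ∀ j, ∃ n : ℤ, p.2 j = (n : ℝ) * (2 : ℝ) ^ (-(p.1 : ℝ) / d)}

/-!
Since `0 ≤ φ ≤ 2 C_d` and `φ` does not increase along rays from the origin, `|ψ| ≤ C_d`;
integrating `φ` over the cube `[-1, 1]^d`, where it equals `2 C_d`, gives `2^(d+1) C_d ≤ 1`, so
`C_d ≤ 1/4`.
As `ψ` vanishes outside `(-6, 6)^d`, at most `12^d` translates of a given level `k` are nonzero at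
a given point, and each contributes at most `A C_d 2^(-2k/d)`. The levels above `K` are then summed
as a geometric series.
-/

section Series

lemma enorm_tsum_sub_tsum_le {ι E : Type*} [NormedAddCommGroup E] [CompleteSpace E]
    {s t u : Set ι} (hu : s ∪ t = u) (hst : Disjoint s t) {g : ι → E}
    (hg : Summable fun i : u => g i) :
    ‖(∑' i : u, g i) - ∑' i : s, g i‖ₑ ≤ ∑' i : t, ‖g i‖ₑ := by
  subst hu
  have hs : Summable (g ∘ ((↑) : s → ι)) :=
    hg.comp_injective (Set.inclusion_injective Set.subset_union_left)
  have ht : Summable (g ∘ ((↑) : t → ι)) :=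
    hg.comp_injective (Set.inclusion_injective Set.subset_union_right)
  rw [hs.tsum_union_disjoint hst ht, add_sub_cancel_left]
  exact enorm_tsum_le_tsum_enorm

lemma tsum_ofReal_mul_rpow_neg_mul_add_natCast {b s c : ℝ} (hb : 1 < b) (hs : 0 < s) (hc : 0 ≤ c)
    (t : ℝ) :
    ∑' m : ℕ, ENNReal.ofReal (c * b ^ (-(s * (t + m)))) =
      ENNReal.ofReal (c * b ^ (-(s * t)) / (1 - b ^ (-s))) := by
  have hb0 : 0 < b := zero_lt_one.trans hb
  have hterm (m : ℕ) : c * b ^ (-(s * (t + m))) = c * b ^ (-(s * t)) * (b ^ (-s)) ^ m := by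
    rw [← Real.rpow_mul_natCast hb0.le, mul_assoc, ← Real.rpow_add hb0]
    ring_nf
  have hgeom := (hasSum_geometric_of_lt_one (Real.rpow_nonneg hb0.le (-s))
    (Real.rpow_lt_one_of_one_lt_of_neg hb (neg_lt_zero.2 hs))).mul_left (c * b ^ (-(s * t)))
  simp only [hterm]
  rw [div_eq_mul_inv, ← hgeom.tsum_eq,
    ENNReal.ofReal_tsum_of_nonneg (fun m => by positivity) hgeom.summable]

end Series

section LatticeBox

variable {ι : Type*} [Fintype ι] [DecidableEq ι]

/-- The box of `(2r)^|ι|` integer points around `v`; it contains every integer point whose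
coordinates are all at distance less than `r` from those of `v`. -/
noncomputable def latticeBox (v : ι → ℝ) (r : ℕ) : Finset (ι → ℤ) :=
  Fintype.piFinset fun i => Finset.Ioc (⌊v i⌋ - r) (⌊v i⌋ + r)

lemma card_latticeBox (v : ι → ℝ) (r : ℕ) : (latticeBox v r).card = (2 * r) ^ Fintype.card ι := by
  have hside (m : ℤ) : (m + r - (m - r)).toNat = 2 * r := by lia
  simp only [latticeBox, Fintype.card_piFinset, Int.card_Ioc, hside, Finset.prod_const,
    Finset.card_univ]

lemma mem_latticeBox_of_abs_sub_lt {v : ι → ℝ} {r : ℕ} {n : ι → ℤ}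
    (h : ∀ i, |v i - n i| < r) : n ∈ latticeBox v r := by
  refine Fintype.mem_piFinset.2 fun i => Finset.mem_Ioc.2 ?_
  obtain ⟨hlower, hupper⟩ := abs_lt.1 (h i)
  constructor
  · have : (⌊v i⌋ : ℝ) - r < n i := by linarith [Int.floor_le (v i)]
    exact_mod_cast this
  · have : (n i : ℝ) < ⌊v i⌋ + r + 1 := by linarith [Int.lt_floor_add_one (v i)]
    exact Int.lt_add_one_iff.1 (by exact_mod_cast this)

end LatticeBox

section Trapezoid

variable {x y : ℝ}

lemma trap_eq_max_min (x : ℝ) : trap x = max 0 (min 2 (3 - |x|)) := by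
  unfold trap rect
  grind

lemma trap_le_two (x : ℝ) : trap x ≤ 2 := by
  rw [trap_eq_max_min]
  exact max_le zero_le_two (min_le_left _ _)

lemma trap_eq_two (hx : |x| ≤ 1) : trap x = 2 := by
  rw [trap_eq_max_min, min_eq_left (by linarith), max_eq_right zero_le_two]

lemma trap_eq_zero (hx : 3 ≤ |x|) : trap x = 0 := by
  rw [trap_eq_max_min]
  exact max_eq_left (min_le_of_right_le (by linarith))

lemma trap_le_trap_of_abs_le (h : |y| ≤ |x|) : trap x ≤ trap y := by
  rw [trap_eq_max_min, trap_eq_max_min]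
  gcongr

end Trapezoid

section ScalingFunction

variable {d : ℕ} {Cd : ℝ} {x y : EuclideanSpace ℝ (Fin d)}

lemma scalingFn_nonneg (hCd : 0 ≤ Cd) (x : EuclideanSpace ℝ (Fin d)) : 0 ≤ scalingFn d Cd x :=
  mul_nonneg hCd (le_max_left _ _)

lemma scalingFn_le_scalingFn_of_abs_le (hCd : 0 ≤ Cd) (h : ∀ j, |y j| ≤ |x j|) :
    scalingFn d Cd x ≤ scalingFn d Cd y := by
  unfold scalingFn rect
  gcongr with j
  exact trap_le_trap_of_abs_le (h j)

lemma scalingFn_eq_two_mul (Cd : ℝ) (hx : ∀ j, |x j| ≤ 1) : scalingFn d Cd x = 2 * Cd := by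
  have hsum : ∑ j, trap (x j) = d * 2 := by simp [trap_eq_two (hx _)]
  rw [scalingFn, rect, hsum, show (d : ℝ) * 2 - 2 * (d - 1) = 2 by ring, max_eq_right zero_le_two,
    mul_comm]

lemma scalingFn_le_two_mul (hCd : 0 ≤ Cd) (x : EuclideanSpace ℝ (Fin d)) :
    scalingFn d Cd x ≤ 2 * Cd :=
  calc scalingFn d Cd x ≤ scalingFn d Cd 0 := scalingFn_le_scalingFn_of_abs_le hCd (by simp)
    _ = 2 * Cd := scalingFn_eq_two_mul Cd (by simp)

lemma scalingFn_eq_zero (Cd : ℝ) {j : Fin d} (hx : 3 ≤ |x j|) : scalingFn d Cd x = 0 := by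
  have hsum : ∑ i, trap (x i) ≤ 2 * ((d : ℝ) - 1) :=
    calc ∑ i, trap (x i) = ∑ i ∈ Finset.univ.erase j, trap (x i) := by
          rw [← Finset.add_sum_erase _ _ (Finset.mem_univ j), trap_eq_zero hx, zero_add]
      _ ≤ ∑ _i ∈ Finset.univ.erase j, (2 : ℝ) := Finset.sum_le_sum fun i _ => trap_le_two (x i)
      _ = 2 * ((d : ℝ) - 1) := by simp [Nat.cast_pred j.pos, mul_comm]
  rw [scalingFn, rect, max_eq_left (sub_nonpos.2 hsum), mul_zero]

lemma volume_preimage_ofLp_closedBall {ι : Type*} [Fintype ι] (a : ι → ℝ) {r : ℝ} (hr : 0 ≤ r) :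
    volume ((WithLp.ofLp : EuclideanSpace ℝ ι → ι → ℝ) ⁻¹' Metric.closedBall a r) =
      ENNReal.ofReal ((2 * r) ^ Fintype.card ι) := by
  rw [(PiLp.volume_preserving_ofLp ι).measure_preimage measurableSet_closedBall.nullMeasurableSet,
    Real.volume_pi_closedBall a hr]

lemma two_pow_succ_mul_le_integral_scalingFn (hCd : 0 ≤ Cd)
    (hint : Integrable (scalingFn d Cd)) :
    2 ^ (d + 1) * Cd ≤ ∫ x, scalingFn d Cd x := by
  let cube : Set (EuclideanSpace ℝ (Fin d)) := WithLp.ofLp ⁻¹' Metric.closedBall 0 1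
  have hmeas : MeasurableSet cube :=
    (PiLp.volume_preserving_ofLp (Fin d)).measurable measurableSet_closedBall
  have hcube : ∀ x ∈ cube, scalingFn d Cd x = 2 * Cd := fun x hx =>
    scalingFn_eq_two_mul Cd fun j => (norm_le_pi_norm _ j).trans (mem_closedBall_zero_iff.1 hx)
  calc 2 ^ (d + 1) * Cd = ∫ _ in cube, 2 * Cd := by
        rw [setIntegral_const, measureReal_def, volume_preimage_ofLp_closedBall _ zero_le_one,
          ENNReal.toReal_ofReal (by positivity), Fintype.card_fin, smul_eq_mul]
        ring
    _ = ∫ x in cube, scalingFn d Cd x := (setIntegral_congr_fun hmeas hcube).symm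
    _ ≤ ∫ x, scalingFn d Cd x :=
        setIntegral_le_integral hint (.of_forall (scalingFn_nonneg hCd))

lemma le_one_fourth_of_integral_scalingFn_eq_one (hd : 1 ≤ d) (hCd : 0 ≤ Cd)
    (hnorm : ∫ x, scalingFn d Cd x = 1) : Cd ≤ 1 / 4 := by
  have hint : Integrable (scalingFn d Cd) := .of_integral_ne_zero (hnorm ▸ one_ne_zero)
  have hmul : 4 * Cd ≤ 1 :=
    calc 4 * Cd = 2 ^ (1 + 1) * Cd := by norm_num
      _ ≤ 2 ^ (d + 1) * Cd := by gcongr; norm_num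
      _ ≤ 1 := hnorm ▸ two_pow_succ_mul_le_integral_scalingFn hCd hint
  linarith

end ScalingFunction

section Wavelet

variable {d : ℕ} {Cd : ℝ}

lemma abs_psiFn_le (hCd : 0 ≤ Cd) (x : EuclideanSpace ℝ (Fin d)) : |psiFn d Cd x| ≤ Cd := by
  set c : ℝ := 2 ^ (-(1 : ℝ) / d)
  have hc : |c| ≤ 1 := by
    rw [abs_of_nonneg (by positivity)]
    exact Real.rpow_le_one_of_one_le_of_nonpos one_le_two
      (div_nonpos_of_nonpos_of_nonneg (by norm_num) d.cast_nonneg)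
  have hmono : scalingFn d Cd x ≤ scalingFn d Cd (c • x) :=
    scalingFn_le_scalingFn_of_abs_le hCd fun j => by
      rw [PiLp.smul_apply, smul_eq_mul, abs_mul]
      exact mul_le_of_le_one_left (abs_nonneg _) hc
  have hx := scalingFn_le_two_mul hCd x
  have hcx := scalingFn_le_two_mul hCd (c • x)
  have hx0 := scalingFn_nonneg hCd x
  rw [psiFn, abs_le]
  constructor <;> linarith

lemma psiFn_eq_zero (Cd : ℝ) {x : EuclideanSpace ℝ (Fin d)} {j : Fin d} (hx : 6 ≤ |x j|) :
    psiFn d Cd x = 0 := by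
  have hd : (1 : ℝ) ≤ d := by exact_mod_cast j.pos
  have hc : (2 : ℝ)⁻¹ ≤ 2 ^ (-(1 : ℝ) / d) := by
    rw [← Real.rpow_neg_one, neg_div]
    exact Real.rpow_le_rpow_of_exponent_le one_le_two (neg_le_neg (div_le_one_of_le₀ hd (by simp)))
  have hcx : 3 ≤ |((2 : ℝ) ^ (-(1 : ℝ) / d) • x) j| := by
    rw [PiLp.smul_apply, smul_eq_mul, abs_mul, abs_of_nonneg (by positivity)]
    calc (3 : ℝ) = 2⁻¹ * 6 := by norm_num
      _ ≤ _ := by gcongr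
  rw [psiFn, scalingFn_eq_zero Cd (by linarith : 3 ≤ |x j|), scalingFn_eq_zero Cd hcx, mul_zero,
    sub_zero]

lemma abs_psikb_le (hCd : 0 ≤ Cd) (k : ℤ) (b x : EuclideanSpace ℝ (Fin d)) :
    |psikb d Cd k b x| ≤ 2 ^ ((k : ℝ) / 2) * Cd := by
  rw [psikb, abs_mul, abs_of_nonneg (by positivity)]
  gcongr
  exact abs_psiFn_le hCd _

lemma abs_mul_abs_psikb_le (hCd : 0 ≤ Cd) {A a : ℝ} {k : ℤ}
    (ha : |a| ≤ A * (2 : ℝ) ^ (-(2 * (k : ℝ) / d + (k : ℝ) / 2)))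
    (b x : EuclideanSpace ℝ (Fin d)) :
    |a| * |psikb d Cd k b x| ≤ A * Cd * 2 ^ (-(2 * (k : ℝ) / d)) :=
  calc |a| * |psikb d Cd k b x|
      ≤ A * 2 ^ (-(2 * (k : ℝ) / d + (k : ℝ) / 2)) * (2 ^ ((k : ℝ) / 2) * Cd) :=
        mul_le_mul ha (abs_psikb_le hCd k b x) (abs_nonneg _) ((abs_nonneg a).trans ha)
    _ = A * Cd * (2 ^ (-(2 * (k : ℝ) / d + (k : ℝ) / 2)) * 2 ^ ((k : ℝ) / 2)) := by ring
    _ = A * Cd * 2 ^ (-(2 * (k : ℝ) / d)) := by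
        rw [← Real.rpow_add two_pos]
        ring_nf

end Wavelet

section Lattice

variable {d : ℕ} {Cd : ℝ}

/-- The point `2^(-k/d) n` of the lattice `2^(-k/d) ℤ^d`, parametrizing level `k` of the index set
`latticeSet d` by the integer vectors `n`. -/
noncomputable def latticePoint (d : ℕ) (k : ℤ) (n : Fin d → ℤ) : EuclideanSpace ℝ (Fin d) :=
  WithLp.toLp 2 fun j => (n j : ℝ) * (2 : ℝ) ^ (-(k : ℝ) / d)

lemma mk_mem_latticeSet_iff {k : ℤ} {b : EuclideanSpace ℝ (Fin d)} :
    (k, b) ∈ latticeSet d ↔ ∃ n, latticePoint d k n = b := by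
  constructor
  · intro hb
    choose n hn using hb
    exact ⟨n, PiLp.ext fun j => (hn j).symm⟩
  · rintro ⟨n, rfl⟩ j
    exact ⟨n j, rfl⟩

lemma smul_sub_latticePoint_apply (k : ℤ) (n : Fin d → ℤ) (x : EuclideanSpace ℝ (Fin d))
    (j : Fin d) :
    ((2 : ℝ) ^ ((k : ℝ) / d) • (x - latticePoint d k n)) j = 2 ^ ((k : ℝ) / d) * x j - n j := by
  have hinv : (2 : ℝ) ^ ((k : ℝ) / d) * 2 ^ (-(k : ℝ) / d) = 1 := by
    rw [← Real.rpow_add two_pos, neg_div, add_neg_cancel, Real.rpow_zero]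
  simp only [latticePoint, PiLp.smul_apply, PiLp.sub_apply, smul_eq_mul]
  linear_combination -(n j : ℝ) * hinv

lemma psikb_latticePoint_eq_zero (Cd : ℝ) {k : ℤ} {n : Fin d → ℤ} {x : EuclideanSpace ℝ (Fin d)}
    (hn : n ∉ latticeBox (fun j => 2 ^ ((k : ℝ) / d) * x j) 6) :
    psikb d Cd k (latticePoint d k n) x = 0 := by
  obtain ⟨j, hj⟩ : ∃ j, 6 ≤ |2 ^ ((k : ℝ) / d) * x j - n j| := by
    by_contra! h
    exact hn (mem_latticeBox_of_abs_sub_lt h)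
  rw [← smul_sub_latticePoint_apply] at hj
  rw [psikb, psiFn_eq_zero Cd hj, mul_zero]

lemma tsum_abs_mul_abs_psikb_level_le (hCd : 0 ≤ Cd) {A : ℝ} {k : ℤ} {a : (Fin d → ℤ) → ℝ}
    (ha : ∀ n, |a n| ≤ A * (2 : ℝ) ^ (-(2 * (k : ℝ) / d + (k : ℝ) / 2)))
    (x : EuclideanSpace ℝ (Fin d)) :
    ∑' n, ENNReal.ofReal (|a n| * |psikb d Cd k (latticePoint d k n) x|) ≤
      ENNReal.ofReal (12 ^ d * A * Cd * 2 ^ (-(2 * (k : ℝ) / d))) := by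
  rw [tsum_eq_sum (s := latticeBox (fun j => 2 ^ ((k : ℝ) / d) * x j) 6) fun n hn => by
      simp [psikb_latticePoint_eq_zero Cd hn],
    ← ENNReal.ofReal_sum_of_nonneg fun _ _ => by positivity]
  apply ENNReal.ofReal_le_ofReal
  calc _ ≤ (latticeBox _ 6).card • (A * Cd * 2 ^ (-(2 * (k : ℝ) / d))) :=
        Finset.sum_le_card_nsmul _ _ _ fun n _ => abs_mul_abs_psikb_le hCd (ha n) _ x
    _ = 12 ^ d * A * Cd * 2 ^ (-(2 * (k : ℝ) / d)) := by
        rw [card_latticeBox, Fintype.card_fin, nsmul_eq_mul]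
        push_cast
        ring

lemma enorm_tsum_latticeSet_sub_tsum_le {E : Type*} [NormedAddCommGroup E] [CompleteSpace E]
    (K : ℤ) {g : ℤ × EuclideanSpace ℝ (Fin d) → E}
    (hg : Summable fun q : {p // p ∈ latticeSet d} => g q) :
    ‖(∑' q : {p // p ∈ latticeSet d}, g q) - ∑' q : {p // p ∈ latticeSet d ∧ p.1 ≤ K}, g q‖ₑ ≤
      ∑' q : {p // p ∈ latticeSet d ∧ K < p.1}, ‖g q‖ₑ := by
  have hunion : {p | p ∈ latticeSet d ∧ p.1 ≤ K} ∪ {p | p ∈ latticeSet d ∧ K < p.1} =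
      latticeSet d := by
    ext p
    simp [← and_or_left, le_or_gt]
  have hdisj : Disjoint {p | p ∈ latticeSet d ∧ p.1 ≤ K} {p | p ∈ latticeSet d ∧ K < p.1} :=
    Set.disjoint_left.2 fun p hle hlt => hle.2.not_gt hlt.2
  exact enorm_tsum_sub_tsum_le hunion hdisj hg

lemma tsum_latticeSet_tail_le (K : ℤ) (F : ℤ → EuclideanSpace ℝ (Fin d) → ENNReal) :
    ∑' q : {p : ℤ × EuclideanSpace ℝ (Fin d) // p ∈ latticeSet d ∧ K < p.1}, F q.1.1 q.1.2 ≤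
      ∑' (m : ℕ) (n : Fin d → ℤ), F (K + 1 + m) (latticePoint d (K + 1 + m) n) := by
  let param (q : ℕ × (Fin d → ℤ)) :
      {p : ℤ × EuclideanSpace ℝ (Fin d) // p ∈ latticeSet d ∧ K < p.1} :=
    ⟨(K + 1 + q.1, latticePoint d (K + 1 + q.1) q.2), mk_mem_latticeSet_iff.2 ⟨q.2, rfl⟩,
      show K < K + 1 + q.1 by lia⟩
  have hparam : Function.Surjective param := by
    rintro ⟨⟨k, b⟩, hb, hk : K < k⟩
    obtain ⟨n, rfl⟩ := mk_mem_latticeSet_iff.1 hb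
    obtain ⟨m, rfl⟩ := Int.le.dest (Int.add_one_le_of_lt hk)
    exact ⟨(m, n), rfl⟩
  rw [← ENNReal.tsum_prod]
  exact ENNReal.tsum_le_tsum_comp_of_surjective hparam _

lemma tsum_abs_mul_abs_psikb_tail_le (hd : 1 ≤ d) (hCd : 0 ≤ Cd) {A : ℝ} (hA : 0 ≤ A)
    {α : ℤ → EuclideanSpace ℝ (Fin d) → ℝ}
    (hα : ∀ (k : ℤ) (b : EuclideanSpace ℝ (Fin d)), (k, b) ∈ latticeSet d →
      |α k b| ≤ A * (2 : ℝ) ^ (-(2 * (k : ℝ) / d + (k : ℝ) / 2)))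
    (x : EuclideanSpace ℝ (Fin d)) (K : ℤ) :
    ∑' q : {p : ℤ × EuclideanSpace ℝ (Fin d) // p ∈ latticeSet d ∧ K < p.1},
        ENNReal.ofReal (|α q.1.1 q.1.2| * |psikb d Cd q.1.1 q.1.2 x|) ≤
      ENNReal.ofReal (12 ^ d * A * Cd * (2 : ℝ) ^ (-(2 * ((K : ℝ) + 1)) / d) /
        (1 - (2 : ℝ) ^ (-(2 : ℝ) / d))) := by
  have hrate : (0 : ℝ) < 2 / d := div_pos two_pos (by exact_mod_cast hd)
  calc _ ≤ ∑' (m : ℕ) (n : Fin d → ℤ),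
          ENNReal.ofReal (|α (K + 1 + m) (latticePoint d (K + 1 + m) n)| *
            |psikb d Cd (K + 1 + m) (latticePoint d (K + 1 + m) n) x|) :=
        tsum_latticeSet_tail_le K fun k b => ENNReal.ofReal (|α k b| * |psikb d Cd k b x|)
    _ ≤ ∑' m : ℕ,
          ENNReal.ofReal (12 ^ d * A * Cd * 2 ^ (-(2 * ((K + 1 + m : ℤ) : ℝ) / d))) :=
        ENNReal.tsum_le_tsum fun m => tsum_abs_mul_abs_psikb_level_le hCd
          (fun n => hα _ _ (mk_mem_latticeSet_iff.2 ⟨n, rfl⟩)) x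
    _ = ∑' m : ℕ, ENNReal.ofReal (12 ^ d * A * Cd * 2 ^ (-(2 / d * ((K : ℝ) + 1 + m)))) := by
        push_cast
        simp only [div_mul_eq_mul_div]
    _ = _ := by
        rw [tsum_ofReal_mul_rpow_neg_mul_add_natCast one_lt_two hrate (by positivity),
          div_mul_eq_mul_div, neg_div, neg_div]

end Lattice

theorem statement10 (d : ℕ) (hd : 1 ≤ d) (Cd : ℝ) (hCd : 0 < Cd)
    (hnorm : ∫ x : EuclideanSpace ℝ (Fin d), scalingFn d Cd x = 1)
    (A : ℝ) (hA : 0 ≤ A) (α : ℤ → EuclideanSpace ℝ (Fin d) → ℝ)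
    (hα : ∀ (k : ℤ) (b : EuclideanSpace ℝ (Fin d)), (k, b) ∈ latticeSet d →
      |α k b| ≤ A * (2 : ℝ) ^ (-(2 * (k : ℝ) / d + (k : ℝ) / 2)))
    (x : EuclideanSpace ℝ (Fin d)) (K : ℤ) :
    (∑' q : {p : ℤ × EuclideanSpace ℝ (Fin d) // p ∈ latticeSet d ∧ K < p.1},
        ENNReal.ofReal (|α q.1.1 q.1.2| * |psikb d Cd q.1.1 q.1.2 x|)) ≤
      ENNReal.ofReal ((12 ^ d * A / 4) * (2 : ℝ) ^ (-(2 * ((K : ℝ) + 1)) / d) /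
        (1 - (2 : ℝ) ^ (-(2 : ℝ) / d))) ∧
    ∀ f fK : EuclideanSpace ℝ (Fin d) → ℝ,
      (∀ y, Summable fun q : {p : ℤ × EuclideanSpace ℝ (Fin d) // p ∈ latticeSet d} =>
        |α q.1.1 q.1.2 * psikb d Cd q.1.1 q.1.2 y|) →
      (∀ y, f y = ∑' q : {p : ℤ × EuclideanSpace ℝ (Fin d) // p ∈ latticeSet d},
        α q.1.1 q.1.2 * psikb d Cd q.1.1 q.1.2 y) →
      (∀ y, fK y = ∑' q : {p : ℤ × EuclideanSpace ℝ (Fin d) // p ∈ latticeSet d ∧ p.1 ≤ K},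
        α q.1.1 q.1.2 * psikb d Cd q.1.1 q.1.2 y) →
      |f x - fK x| ≤ (12 ^ d * A / 4) * (2 : ℝ) ^ (-(2 * ((K : ℝ) + 1)) / d) /
        (1 - (2 : ℝ) ^ (-(2 : ℝ) / d)) := by
  have hden : 0 ≤ 1 - (2 : ℝ) ^ (-(2 : ℝ) / d) :=
    sub_nonneg.2 <| Real.rpow_le_one_of_one_le_of_nonpos one_le_two
      (div_nonpos_of_nonpos_of_nonneg (by norm_num) d.cast_nonneg)
  have hCd4 : Cd ≤ 1 / 4 := le_one_fourth_of_integral_scalingFn_eq_one hd hCd.le hnorm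
  have hconst : 12 ^ d * A * Cd ≤ 12 ^ d * A / 4 := by
    rw [div_eq_mul_one_div (12 ^ d * A)]
    gcongr
  have htail := (tsum_abs_mul_abs_psikb_tail_le hd hCd.le hA hα x K).trans <|
    ENNReal.ofReal_le_ofReal <|
      div_le_div_of_nonneg_right (mul_le_mul_of_nonneg_right hconst (by positivity)) hden
  refine ⟨htail, fun f fK hsum hf hfK => ?_⟩
  have hdiff := enorm_tsum_latticeSet_sub_tsum_le K
    (g := fun p => α p.1 p.2 * psikb d Cd p.1 p.2 x) (hsum x).of_abs
  simp only [Real.enorm_eq_ofReal_abs, abs_mul] at hdiff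
  rw [hf x, hfK x, ← ENNReal.ofReal_le_ofReal_iff (div_nonneg (by positivity) hden)]
  exact hdiff.trans htail
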